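/- There exists a dense Gδ subset R of P([0,1]^d) (with the weak topology) such that every measure μ ∈ R satisfies the multifractal formalism at every exponent h ∈ [0,d]: dim_H E_μ(h) = inf_{q ∈ ℝ} (qh − τ_μ(q)). -/

import Mathlib

open MeasureTheory Metric Filter Set
open scoped ENNReal NNReal Topology

noncomputable section

/-- The unit cube `[0,1]^d` of `ℝ^d` equipped with the supremum metric,
viewed as a (compact) metric space. -/
abbrev Cube (d : ℕ) : Type := ↥(Set.Icc (0 : Fin d → ℝ) 1)

/-- The local (lower) dimension `h_μ(x) = liminf_{r → 0⁺} log μ(B(x,r)) / log r`. -/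
noncomputable def locDim {d : ℕ} (μ : Measure (Cube d)) (x : Cube d) : EReal :=
  Filter.liminf
    (fun r : ℝ => ENNReal.log (μ (Metric.ball x r)) / (Real.log r : EReal))
    (nhdsWithin 0 (Set.Ioi 0))

/-- The level set `E_μ(h) = {x : h_μ(x) = h}`. -/
def levelSet {d : ℕ} (μ : Measure (Cube d)) (h : ℝ) : Set (Cube d) :=
  {x | locDim μ x = (h : EReal)}

/-- The dyadic cube `I_{j,k} = ∏ᵢ [kᵢ 2^{-j}, (kᵢ+1) 2^{-j})`, as a subset of the cube. -/
def dyadicCube (d j : ℕ) (k : Fin d → Fin (2 ^ j)) : Set (Cube d) :=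
  {x | ∀ i, (k i : ℝ) / 2 ^ j ≤ (x : Fin d → ℝ) i ∧ (x : Fin d → ℝ) i < ((k i : ℝ) + 1) / 2 ^ j}

/-- `s_j(q) = Σ_{Q ∈ G_j, μ(Q) ≠ 0} μ(Q)^q`. -/
def dyadicSum {d : ℕ} (μ : Measure (Cube d)) (q : ℝ) (j : ℕ) : ℝ :=
  ∑ k ∈ Finset.univ.filter (fun k : Fin d → Fin (2 ^ j) => μ (dyadicCube d j k) ≠ 0),
    (μ (dyadicCube d j k)).toReal ^ q

/-- The `L^q`-spectrum `τ_μ(q) = liminf_j -(1/j) log₂ s_j(q)`. -/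
def lqSpectrum {d : ℕ} (μ : Measure (Cube d)) (q : ℝ) : EReal :=
  Filter.liminf
    (fun j : ℕ => ((-(1 / (j : ℝ)) * Real.logb 2 (dyadicSum μ q j) : ℝ) : EReal))
    Filter.atTop

/-!
At infinitely many scales `2^{-j}`, a typical measure `μ` gives every dyadic cube of that scale, and
even its corner of size `2^{-j²}`, a mass of at least `2^{-jd} / j`, and it gives the cube at the
origin a mass of at least `1 / j`. The first bound forces `τ_μ(q) ≤ d(q - 1)` and the second forces
`τ_μ(q) ≤ 0` for `q ≥ 0`; with `τ_μ(1) = 0`, the Legendre transform of `τ_μ` is the identity on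
`[0, d]`.

A Vitali covering argument gives `dim_H E_μ(h) ≤ h` for every finite measure, and more precisely
`ℋ^h {h_μ < h} = 0`. For the converse, a point within about `2^{-jd/h}` of the corner of its cube of
generation `j`, for infinitely many of those `j`, has local dimension at most `h`. Such points are
obtained by setting their binary digits to zero in sparse blocks that start at `j` and end slightly
before `jd/h`. If the remaining digits are independent and uniform, the law of the point is
absolutely continuous with respect to `ℋ^h`. Hence it does not charge `{h_μ < h}`, so it lives on
`E_μ(h)`, which has dimension at least `h`.
-/

theorem ediam_ball_le {X : Type*} [PseudoMetricSpace X] (x : X) (r : ℝ) :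
    ediam (ball x r) ≤ ENNReal.ofReal (2 * r) := by
  rw [← Metric.eball_ofReal, ENNReal.ofReal_mul zero_le_two, ENNReal.ofReal_ofNat]
  exact ediam_eball_le

section UpperBound

variable {X : Type*} [MetricSpace X] [SecondCountableTopology X] [MeasurableSpace X] {μ : Measure X}
  {S : Set X} {t : ℝ}

theorem exists_disjoint_balls_covering
    (hS : ∀ x ∈ S, ∃ᶠ r in 𝓝[>] (0 : ℝ), ENNReal.ofReal (r ^ t) < μ (ball x r))
    {δ : ℝ} (hδ : 0 < δ) :
    ∃ (u : Set X) (r : X → ℝ), u.Countable ∧ u.PairwiseDisjoint (fun x => ball x (r x)) ∧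
      S ⊆ ⋃ x : u, ball (x : X) (4 * r x) ∧
      ∀ x ∈ u, r x ∈ Ioo 0 δ ∧ ENNReal.ofReal (r x ^ t) < μ (ball x (r x)) := by
  have small_radius : ∀ x ∈ S, ∃ r ∈ Ioo 0 δ, ENNReal.ofReal (r ^ t) < μ (ball x r) :=
    fun x hx => ((hS x hx).and_eventually (Ioo_mem_nhdsGT hδ)).exists.imp fun _ => And.symm
  choose! r hrδ hrμ using small_radius
  obtain ⟨u, huS, hdisj, hcov⟩ := Vitali.exists_disjoint_subfamily_covering_enlargement_ball
    S id r δ (fun x hx => (hrδ x hx).2.le) 4 (by norm_num)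
  refine ⟨u, r, ?_, hdisj, fun x hx => ?_, fun x hx => ⟨hrδ x (huS hx), hrμ x (huS hx)⟩⟩
  · exact hdisj.countable_of_isOpen (fun _ _ => isOpen_ball)
      fun x hx => nonempty_ball.2 (hrδ x (huS hx)).1
  · obtain ⟨y, hy, hsub⟩ := hcov x hx
    exact mem_iUnion.2 ⟨⟨y, hy⟩, hsub (mem_ball_self (hrδ x hx).1)⟩

variable [BorelSpace X]

theorem hausdorffMeasure_le_of_frequently_rpow_lt (ht : 0 ≤ t)
    (hS : ∀ x ∈ S, ∃ᶠ r in 𝓝[>] (0 : ℝ), ENNReal.ofReal (r ^ t) < μ (ball x r)) :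
    μH[t] S ≤ ENNReal.ofReal (8 ^ t) * μ univ := by
  choose u r hu hdisj hcov hr hrμ using fun n : ℕ =>
    exists_disjoint_balls_covering hS (Nat.one_div_pos_of_nat (α := ℝ) (n := n))
  have (n : ℕ) : Countable (u n) := (hu n).to_subtype
  have hdiam (n : ℕ) (x : u n) : ediam (ball (x : X) (4 * r n x)) ≤ ENNReal.ofReal (8 * r n x) := by
    convert ediam_ball_le (x : X) (4 * r n x) using 2
    ring
  have hmesh : Tendsto (fun n : ℕ => ENNReal.ofReal (8 * (1 / ((n : ℝ) + 1)))) atTop (𝓝 0) := by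
    simpa using ENNReal.tendsto_ofReal
      ((tendsto_one_div_add_atTop_nhds_zero_nat (𝕜 := ℝ)).const_mul 8)
  refine (Measure.hausdorffMeasure_le_liminf_tsum t S _ hmesh
    (fun n (x : u n) => ball (x : X) (4 * r n x))
    (Eventually.of_forall fun n x => (hdiam n x).trans (ENNReal.ofReal_le_ofReal ?_))
    (Eventually.of_forall hcov)).trans
    (liminf_le_of_frequently_le' (Frequently.of_forall fun n => ?_))
  · linarith [(hr n x x.2).2]
  calc ∑' x : u n, ediam (ball (x : X) (4 * r n x)) ^ t
      ≤ ∑' x : u n, ENNReal.ofReal (8 ^ t) * μ (ball (x : X) (r n x)) := by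
        refine ENNReal.tsum_le_tsum fun x => ?_
        calc ediam (ball (x : X) (4 * r n x)) ^ t
            ≤ ENNReal.ofReal (8 * r n x) ^ t := ENNReal.rpow_le_rpow (hdiam n x) ht
          _ = ENNReal.ofReal (8 ^ t) * ENNReal.ofReal (r n x ^ t) := by
              have h0 := (hr n x x.2).1.le
              rw [ENNReal.ofReal_rpow_of_nonneg (by positivity) ht,
                Real.mul_rpow (by norm_num) h0, ENNReal.ofReal_mul (by positivity)]
          _ ≤ ENNReal.ofReal (8 ^ t) * μ (ball (x : X) (r n x)) := by gcongr; exact (hrμ n x x.2).le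
    _ = ENNReal.ofReal (8 ^ t) * μ (⋃ x : u n, ball (x : X) (r n x)) := by
        rw [ENNReal.tsum_mul_left, measure_iUnion _ fun x => isOpen_ball.measurableSet]
        exact (pairwise_subtype_iff_pairwise_set _ _).2 (hdisj n)
    _ ≤ ENNReal.ofReal (8 ^ t) * μ univ := by gcongr; exact subset_univ _

end UpperBound

theorem rpow_lt_measure_of_log_div_lt {α : Type*} [MeasurableSpace α] {μ : Measure α} {s : Set α}
    {r t : ℝ} (hr : r ∈ Ioo 0 1) (h : ENNReal.log (μ s) / (Real.log r : EReal) < (t : EReal)) :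
    ENNReal.ofReal (r ^ t) < μ s := by
  contrapose! h
  have hlog : Real.log r < 0 := Real.log_neg hr.1 hr.2
  have key := EReal.div_le_div_right_of_nonpos (c := (Real.log r : EReal))
    (mod_cast hlog.le) (ENNReal.log_le_log h)
  rwa [ENNReal.log_ofReal_of_pos (Real.rpow_pos_of_pos hr.1 t), Real.log_rpow hr.1,
    ← EReal.coe_div, mul_div_cancel_right₀ _ hlog.ne] at key

section LocDim

variable {d : ℕ} {μ : Measure (Cube d)}

theorem dimH_setOf_locDim_lt_le [IsFiniteMeasure μ] (t : ℝ≥0) :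
    dimH {x | locDim μ x < ((t : ℝ) : EReal)} ≤ t := by
  refine dimH_le_of_hausdorffMeasure_ne_top (ne_top_of_le_ne_top
    (ENNReal.mul_ne_top ENNReal.ofReal_ne_top (measure_ne_top μ univ))
    (hausdorffMeasure_le_of_frequently_rpow_lt t.2 fun x hx => ?_))
  exact ((frequently_lt_of_liminf_lt (h := hx)).and_eventually (Ioo_mem_nhdsGT one_pos)).mono
    fun _ hr => rpow_lt_measure_of_log_div_lt hr.2 hr.1

theorem dimH_levelSet_le [IsFiniteMeasure μ] (h : ℝ≥0) : dimH (levelSet μ h) ≤ h := by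
  refine ENNReal.le_of_forall_pos_le_add fun ε hε _ => ?_
  rw [← ENNReal.coe_add]
  refine (dimH_mono fun x hx => ?_).trans (dimH_setOf_locDim_lt_le (μ := μ) (h + ε))
  exact (hx : locDim μ x = _).trans_lt (EReal.coe_lt_coe_iff.2 (by simpa using hε))

theorem hausdorffMeasure_setOf_locDim_lt [IsFiniteMeasure μ] {h : ℝ≥0} (hh : 0 < h) :
    μH[h] {x | locDim μ x < ((h : ℝ) : EReal)} = 0 := by
  have hsub : {x | locDim μ x < ((h : ℝ) : EReal)} ⊆
      ⋃ q : {q : ℚ // (q : ℝ) < h}, {x | locDim μ x < ((Real.toNNReal q : ℝ) : EReal)} := by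
    intro x hx
    obtain ⟨q, hxq, hqh⟩ := EReal.lt_iff_exists_rat_btwn.1 hx
    exact mem_iUnion.2 ⟨⟨q, EReal.coe_lt_coe_iff.1 hqh⟩,
      hxq.trans_le (EReal.coe_le_coe_iff.2 (Real.le_coe_toNNReal q))⟩
  refine measure_mono_null hsub (measure_iUnion_null fun q => hausdorffMeasure_of_dimH_lt ?_)
  refine (dimH_setOf_locDim_lt_le _).trans_lt (ENNReal.coe_lt_coe.2 (NNReal.coe_lt_coe.1 ?_))
  exact (Real.coe_toNNReal' _).trans_lt (max_lt q.2 hh)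

end LocDim

section MassDistribution

variable {X : Type*} [EMetricSpace X] [MeasurableSpace X] {m : Measure X} {C : ℝ≥0∞} {t : ℝ}

theorem measure_le_ediam_rpow_of_dyadic (ht : 0 < t) (hC : C ≠ ∞)
    (hm : ∀ (l : ℕ) (s : Set X), ediam s ≤ 2⁻¹ ^ l → m s ≤ C * (2⁻¹ ^ l) ^ t)
    {s : Set X} (hs : ediam s ≤ 1) : m s ≤ C * 2 ^ t * ediam s ^ t := by
  rcases eq_or_ne (ediam s) 0 with hs0 | hs0
  · have hlim : Tendsto (fun l : ℕ => C * ((2⁻¹ : ℝ≥0∞) ^ l) ^ t) atTop (𝓝 0) := by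
      have hpow := ENNReal.tendsto_pow_atTop_nhds_zero_of_lt_one ENNReal.one_half_lt_one
      simpa [ENNReal.zero_rpow_of_pos ht] using
        ENNReal.Tendsto.const_mul (hpow.ennrpow_const t) (Or.inr hC)
    exact (ge_of_tendsto' hlim fun l => hm l s (by simp [hs0])).trans zero_le
  · have hex : ∃ n : ℕ, (2⁻¹ : ℝ≥0∞) ^ n < ediam s := ENNReal.exists_inv_two_pow_lt hs0
    obtain ⟨l, hl⟩ : ∃ l, Nat.find hex = l + 1 :=
      Nat.exists_eq_succ_of_ne_zero fun h0 => (Nat.find_spec hex).not_ge (by simpa [h0] using hs)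
    have hlow : (2⁻¹ : ℝ≥0∞) ^ (l + 1) < ediam s := hl ▸ Nat.find_spec hex
    have hup : ediam s ≤ 2⁻¹ ^ l := not_lt.1 (Nat.find_min hex (hl ▸ l.lt_succ_self))
    calc m s ≤ C * (2⁻¹ ^ l) ^ t := hm l s hup
      _ = C * (2 * 2⁻¹ ^ (l + 1)) ^ t := by
          rw [pow_succ', ← mul_assoc, ENNReal.mul_inv_cancel two_ne_zero ENNReal.ofNat_ne_top,
            one_mul]
      _ ≤ C * (2 * ediam s) ^ t := by gcongr
      _ = C * 2 ^ t * ediam s ^ t := by rw [ENNReal.mul_rpow_of_nonneg _ _ ht.le, mul_assoc]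

theorem absolutelyContinuous_hausdorffMeasure [BorelSpace X] (ht : 0 < t) (hC : C ≠ ∞)
    (hm : ∀ (l : ℕ) (s : Set X), ediam s ≤ 2⁻¹ ^ l → m s ≤ C * (2⁻¹ ^ l) ^ t) :
    m ≪ μH[t] := by
  have hC' : C * 2 ^ t ≠ ∞ := ENNReal.mul_ne_top hC (ENNReal.rpow_ne_top_of_nonneg ht.le (by simp))
  have hle : (C * 2 ^ t)⁻¹ • m ≤ μH[t] := by
    refine Measure.le_hausdorffMeasure t _ 1 one_pos fun s hs => ?_
    rw [Measure.smul_apply, smul_eq_mul, ← ENNReal.div_eq_inv_mul]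
    exact ENNReal.div_le_of_le_mul' (measure_le_ediam_rpow_of_dyadic ht hC hm hs)
  intro s hs
  have h0 : (C * 2 ^ t)⁻¹ * m s = 0 := le_antisymm ((hle s).trans hs.le) zero_le
  exact (mul_eq_zero.1 h0).resolve_left (ENNReal.inv_ne_zero.2 hC')

end MassDistribution

section Digits

/-- The integer with binary digits `a 0, …, a (l - 1)`, most significant first. -/
def digitPrefix (a : ℕ → Fin 2) (l : ℕ) : Fin (2 ^ l) :=
  finFunctionFinEquiv fun i : Fin l => a i.rev

theorem digitPrefix_eq_iff {a b : ℕ → Fin 2} {l : ℕ} :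
    digitPrefix a l = digitPrefix b l ↔ ∀ i < l, a i = b i := by
  rw [digitPrefix, digitPrefix, finFunctionFinEquiv.apply_eq_iff_eq, funext_iff]
  exact ⟨fun h i hi => by simpa using h (Fin.rev ⟨i, hi⟩), fun h i => h _ i.rev.is_lt⟩

theorem digitPrefix_div_two_pow (a : ℕ → Fin 2) (l : ℕ) :
    (digitPrefix a l : ℝ) / 2 ^ l = ∑ i ∈ Finset.range l, Real.ofDigitsTerm a i := by
  rw [digitPrefix, finFunctionFinEquiv_apply, ← Equiv.sum_comp Fin.revPerm,
    ← Fin.sum_univ_eq_sum_range]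
  push_cast
  rw [Finset.sum_div]
  refine Finset.sum_congr rfl fun i _ => ?_
  have hpow : (2 : ℝ) ^ l = 2 ^ (i.rev : ℕ) * 2 ^ (i + 1 : ℕ) := by
    rw [← pow_add, Fin.val_rev]
    congr 1
    omega
  simp only [Fin.revPerm_apply, Fin.rev_rev, Real.ofDigitsTerm, Nat.cast_ofNat, hpow]
  field_simp

theorem ofDigits_mem_Icc_of_forall_eq_zero {a : ℕ → Fin 2} {j t : ℕ}
    (h : ∀ i, j ≤ i → i < t → a i = 0) :
    Real.ofDigits a ∈
      Icc ((digitPrefix a j : ℝ) / 2 ^ j) ((digitPrefix a j : ℝ) / 2 ^ j + (2 ^ t)⁻¹) := by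
  have hge : (digitPrefix a j : ℝ) / 2 ^ j ≤ Real.ofDigits a := by
    rw [digitPrefix_div_two_pow, Real.ofDigits_eq_sum_add_ofDigits a j]
    exact le_add_of_nonneg_right (mul_nonneg (by positivity) (Real.ofDigits_nonneg _))
  have htrunc : Real.ofDigits (fun i => if i < j then a i else 0) = digitPrefix a j / 2 ^ j := by
    rw [digitPrefix_div_two_pow, Real.ofDigits, tsum_eq_sum (s := Finset.range j)]
    · exact Finset.sum_congr rfl fun i hi => by simp [Real.ofDigitsTerm, Finset.mem_range.1 hi]
    · exact fun i hi => by simp [Real.ofDigitsTerm, Finset.mem_range.not.1 hi]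
  have habs := Real.abs_ofDigits_sub_ofDigits_le (x := a) (y := fun i => if i < j then a i else 0)
    (n := t) fun i hi => by grind
  rw [htrunc, Nat.cast_ofNat] at habs
  exact ⟨hge, sub_le_iff_le_add'.1 ((le_abs_self _).trans habs)⟩

theorem ofDigits_mul_two_pow_mem_Icc (a : ℕ → Fin 2) (l : ℕ) :
    Real.ofDigits a * 2 ^ l ∈ Icc (digitPrefix a l : ℝ) (digitPrefix a l + 1) := by
  have hpos : (0 : ℝ) < 2 ^ l := by positivity
  obtain ⟨hge, hle⟩ := ofDigits_mem_Icc_of_forall_eq_zero (a := a) (j := l) (t := l)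
    fun i hi hi' => absurd hi hi'.not_ge
  rw [← one_div, ← add_div] at hle
  exact ⟨(div_le_iff₀ hpos).1 hge, (le_div_iff₀ hpos).1 hle⟩

end Digits

section DigitMeasure

/-- The law of an infinite sequence of independent fair coin tosses. -/
def coinMeasure : Measure (ℕ → Fin 2) :=
  Measure.infinitePi fun _ => (PMF.uniformOfFintype (Fin 2)).toMeasure

instance : IsProbabilityMeasure coinMeasure := by unfold coinMeasure; infer_instance

variable (d : ℕ) (F : Set ℕ)

/-- The point of the cube whose `i`-th coordinate has binary digits `ω i`, with the digits at
positions outside `F` replaced by zero. -/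
def digitPoint (ω : Fin d → ℕ → Fin 2) : Cube d :=
  ⟨fun i => Real.ofDigits (F.indicator (ω i)),
    fun _ => Real.ofDigits_nonneg _, fun _ => Real.ofDigits_le_one _⟩

theorem measurable_digitPoint : Measurable (digitPoint d F) := by
  have hind : Measurable fun ω : ℕ → Fin 2 => F.indicator ω :=
    measurable_pi_lambda _ fun i => by
      classical
      simp only [indicator_apply]
      split_ifs <;> fun_prop
  exact Measurable.subtype_mk <| measurable_pi_lambda _ fun i =>
    Real.continuous_ofDigits.measurable.comp (hind.comp (measurable_pi_apply i))

/-- The law of a random point of the cube whose digits at positions in `F` are independent and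
uniform and whose other digits vanish. -/
def digitMeasure : Measure (Cube d) :=
  (Measure.pi fun _ : Fin d => coinMeasure).map (digitPoint d F)

variable [DecidablePred (· ∈ F)]

theorem coinMeasure_digitPrefix_indicator_eq_le (l : ℕ) (v : ℤ) :
    coinMeasure {ω | (digitPrefix (F.indicator ω) l : ℤ) = v} ≤ 2⁻¹ ^ Nat.count (· ∈ F) l := by
  rcases eq_empty_or_nonempty {ω | (digitPrefix (F.indicator ω) l : ℤ) = v} with h | ⟨ω₀, rfl⟩
  · simp [h]
  calc coinMeasure {ω | (digitPrefix (F.indicator ω) l : ℤ) = digitPrefix (F.indicator ω₀) l}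
      ≤ coinMeasure (Set.pi ((Finset.range l).filter (· ∈ F)) fun i => {ω₀ i}) := by
        refine measure_mono fun ω hω i hi => ?_
        obtain ⟨hil, hiF⟩ := Finset.mem_filter.1 hi
        have := digitPrefix_eq_iff.1 (Fin.val_injective (Int.ofNat_injective hω)) i
          (Finset.mem_range.1 hil)
        simpa only [mem_singleton_iff, indicator_of_mem hiF] using this
    _ = 2⁻¹ ^ Nat.count (· ∈ F) l := by
        rw [coinMeasure, Measure.infinitePi_pi _ (fun i _ => measurableSet_singleton _)]
        simp [Nat.count_eq_card_filter_range]

theorem coinMeasure_ofDigits_indicator_mem_Icc_le (l : ℕ) (x : ℝ) :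
    coinMeasure {ω | Real.ofDigits (F.indicator ω) ∈ Icc (x - (2 ^ l)⁻¹) (x + (2 ^ l)⁻¹)} ≤
      4 * 2⁻¹ ^ Nat.count (· ∈ F) l := by
  set a := ⌊x * 2 ^ l⌋
  have hsub : {ω | Real.ofDigits (F.indicator ω) ∈ Icc (x - (2 ^ l)⁻¹) (x + (2 ^ l)⁻¹)} ⊆
      ⋃ v ∈ Finset.Icc (a - 2) (a + 1), {ω | (digitPrefix (F.indicator ω) l : ℤ) = v} := by
    intro ω hω
    have hδ : ((2 : ℝ) ^ l)⁻¹ * 2 ^ l = 1 := inv_mul_cancel₀ (by positivity)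
    have hlow := mul_le_mul_of_nonneg_right hω.1 (by positivity : (0 : ℝ) ≤ 2 ^ l)
    have hup := mul_le_mul_of_nonneg_right hω.2 (by positivity : (0 : ℝ) ≤ 2 ^ l)
    obtain ⟨hge, hle⟩ := ofDigits_mul_two_pow_mem_Icc (F.indicator ω) l
    have hmem : (digitPrefix (F.indicator ω) l : ℤ) ∈ Finset.Icc (a - 2) (a + 1) := by
      have ha := Int.floor_le (x * 2 ^ l)
      have ha' := Int.lt_floor_add_one (x * 2 ^ l)
      rw [Finset.mem_Icc, sub_le_iff_le_add, ← Int.lt_add_one_iff (b := a + 1)]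
      constructor
      · rify; linarith
      · rify; linarith
    exact mem_biUnion hmem rfl
  calc _ ≤ _ := measure_mono hsub
    _ ≤ ∑ v ∈ Finset.Icc (a - 2) (a + 1),
          coinMeasure {ω | (digitPrefix (F.indicator ω) l : ℤ) = v} :=
        measure_biUnion_finset_le _ _
    _ ≤ ∑ _v ∈ Finset.Icc (a - 2) (a + 1), 2⁻¹ ^ Nat.count (· ∈ F) l :=
        Finset.sum_le_sum fun v _ => coinMeasure_digitPrefix_indicator_eq_le F l v
    _ = 4 * 2⁻¹ ^ Nat.count (· ∈ F) l := by
        have hcard : (Finset.Icc (a - 2) (a + 1)).card = 4 := by rw [Int.card_Icc]; omega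
        rw [Finset.sum_const, hcard, nsmul_eq_mul, Nat.cast_ofNat]

theorem digitMeasure_le_of_ediam_le (l : ℕ) {s : Set (Cube d)} (hs : ediam s ≤ 2⁻¹ ^ l) :
    digitMeasure d F s ≤ (4 * 2⁻¹ ^ Nat.count (· ∈ F) l) ^ d := by
  rcases s.eq_empty_or_nonempty with rfl | ⟨x, hx⟩
  · simp
  have hball : s ⊆ closedBall x (2 ^ l)⁻¹ := fun y hy => by
    have hxy := (edist_le_ediam_of_mem hy hx).trans hs
    rw [edist_dist] at hxy
    have := ENNReal.toReal_mono (by simp) hxy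
    simpa [ENNReal.toReal_ofReal dist_nonneg] using this
  let box (i : Fin d) : Set ℝ := Icc (x.1 i - (2 ^ l)⁻¹) (x.1 i + (2 ^ l)⁻¹)
  calc digitMeasure d F s ≤ digitMeasure d F (closedBall x (2 ^ l)⁻¹) := measure_mono hball
    _ = Measure.pi (fun _ : Fin d => coinMeasure) (digitPoint d F ⁻¹' closedBall x (2 ^ l)⁻¹) :=
        Measure.map_apply (measurable_digitPoint d F) measurableSet_closedBall
    _ ≤ Measure.pi (fun _ : Fin d => coinMeasure)
          (Set.pi univ fun i => {ω | Real.ofDigits (F.indicator ω) ∈ box i}) := by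
        refine measure_mono fun ω hω i _ => ?_
        have hdist : dist (digitPoint d F ω).1 x.1 ≤ (2 ^ l)⁻¹ := hω
        have := (dist_le_pi_dist (digitPoint d F ω).1 x.1 i).trans hdist
        rwa [← mem_closedBall, Real.closedBall_eq_Icc] at this
    _ = ∏ i, coinMeasure {ω | Real.ofDigits (F.indicator ω) ∈ box i} := Measure.pi_pi _ _
    _ ≤ ∏ _i : Fin d, 4 * 2⁻¹ ^ Nat.count (· ∈ F) l :=
        Finset.prod_le_prod' fun i _ => coinMeasure_ofDigits_indicator_mem_Icc_le F l (x.1 i)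
    _ = (4 * 2⁻¹ ^ Nat.count (· ∈ F) l) ^ d := by simp

theorem digitMeasure_absolutelyContinuous {h : ℝ} (hh : 0 < h)
    (hF : ∀ l : ℕ, h * l ≤ d * Nat.count (· ∈ F) l) : digitMeasure d F ≪ μH[h] := by
  refine absolutelyContinuous_hausdorffMeasure hh (C := 4 ^ d) (by simp) fun l s hs => ?_
  calc digitMeasure d F s ≤ (4 * 2⁻¹ ^ Nat.count (· ∈ F) l) ^ d :=
        digitMeasure_le_of_ediam_le d F l hs
    _ = 4 ^ d * 2⁻¹ ^ (d * Nat.count (· ∈ F) l : ℝ) := by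
        rw [mul_pow, ← pow_mul, mul_comm _ d, ← Nat.cast_mul, ENNReal.rpow_natCast]
    _ ≤ 4 ^ d * 2⁻¹ ^ (h * l) := by
        gcongr 4 ^ d * ?_
        exact ENNReal.rpow_le_rpow_of_exponent_ge ENNReal.one_half_lt_one.le (hF l)
    _ = 4 ^ d * (2⁻¹ ^ l) ^ h := by
        rw [mul_comm h, ENNReal.rpow_mul, ENNReal.rpow_natCast]

end DigitMeasure

section SparseBlocks

theorem le_add_count_of_forall_Ico {p : ℕ → Prop} [DecidablePred p] {a b : ℕ}
    (h : ∀ i ∈ Ico a b, p i) : b ≤ a + Nat.count p b := by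
  have hsub : Finset.Ico a b ⊆ (Finset.range b).filter p := fun i hi =>
    Finset.mem_filter.2 ⟨Finset.mem_range.2 (Finset.mem_Ico.1 hi).2, h i (Finset.mem_Ico.1 hi)⟩
  have hcard := Finset.card_le_card hsub
  rw [Nat.card_Ico, ← Nat.count_eq_card_filter_range] at hcard
  omega

theorem mul_le_count_of_forall_not {p : ℕ → Prop} [DecidablePred p] {α : ℝ} (hα : α ≤ 1)
    (h : ∀ l, ¬ p l → α * (l + 1) ≤ Nat.count p l) (l : ℕ) : α * l ≤ Nat.count p l := by
  induction l with
  | zero => simp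
  | succ l ih =>
    rw [Nat.count_succ]
    push_cast
    split_ifs with hl
    · linarith
    · simpa using h l hl

theorem tendsto_log_natCast_div_atTop : Tendsto (fun j : ℕ => Real.log j / j) atTop (𝓝 0) :=
  Real.isLittleO_log_id_atTop.tendsto_div_nhds_zero.comp tendsto_natCast_atTop_atTop

/-- The end of the block of vanishing digits starting at position `j`. The logarithm leaves room
for the digits lost in the earlier blocks. -/
def blockEnd (α : ℝ) (j : ℕ) : ℕ := ⌊α⁻¹ * (j - Real.log j)⌋₊

/-- The positions outside all blocks `[J n, blockEnd α (J n))`. -/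
def freePositions (α : ℝ) (J : ℕ → ℕ) : Set ℕ := {i | ∀ n, J n ≤ i → blockEnd α (J n) ≤ i}

variable {α : ℝ}

theorem mul_blockEnd_le (hα : 0 < α) (j : ℕ) : α * blockEnd α j ≤ j - Real.log j := by
  have hnonneg : 0 ≤ α⁻¹ * (j - Real.log j) :=
    mul_nonneg (inv_nonneg.2 hα.le) (sub_nonneg.2 (Real.log_le_self j.cast_nonneg))
  exact (le_inv_mul_iff₀ hα).1 (Nat.floor_le hnonneg)

theorem tendsto_blockEnd_div_atTop (hα : 0 < α) :
    Tendsto (fun j : ℕ => (blockEnd α j : ℝ) / j) atTop (𝓝 α⁻¹) := by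
  have hne : ∀ᶠ j : ℕ in atTop, (j : ℝ) ≠ 0 :=
    (eventually_ne_atTop 0).mono fun j hj => Nat.cast_ne_zero.2 hj
  have hratio : Tendsto (fun j : ℕ => ((j : ℝ) - Real.log j) / j) atTop (𝓝 1) := by
    refine (sub_zero (1 : ℝ) ▸ tendsto_const_nhds.sub tendsto_log_natCast_div_atTop).congr'
      (hne.mono fun j hj => ?_)
    simp only [sub_div, div_self hj]
  have htop : Tendsto (fun j : ℕ => (j : ℝ) - Real.log j) atTop atTop :=
    (hratio.pos_mul_atTop one_pos tendsto_natCast_atTop_atTop).congr'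
      (hne.mono fun j hj => div_mul_cancel₀ _ hj)
  have hfloor := (tendsto_nat_floor_mul_div_atTop (inv_nonneg.2 hα.le)).comp htop
  refine (mul_one α⁻¹ ▸ hfloor.mul hratio).congr' ?_
  filter_upwards [htop.eventually_gt_atTop 0] with j hj
  exact div_mul_div_cancel₀ hj.ne'

theorem eventually_blockEnd_le_sq (hα : 0 < α) : ∀ᶠ j : ℕ in atTop, blockEnd α j ≤ j ^ 2 := by
  have hquot : ∀ᶠ j : ℕ in atTop, (blockEnd α j : ℝ) / j ≤ j :=
    (((tendsto_blockEnd_div_atTop hα).eventually_le_const (lt_add_one α⁻¹)).and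
      (tendsto_natCast_atTop_atTop.eventually_ge_atTop (α⁻¹ + 1))).mono fun _ h => h.1.trans h.2
  filter_upwards [hquot, eventually_gt_atTop 0] with j hj hj0
  rw [div_le_iff₀ (by exact_mod_cast hj0), ← sq] at hj
  exact_mod_cast hj

theorem exists_sparse_seq {p : ℕ → Prop} (hp : ∃ᶠ j in atTop, p j) (α : ℝ) :
    ∃ J : ℕ → ℕ, (∀ n, p (J n)) ∧ StrictMono J ∧
      ∀ m n, m < n → blockEnd α (J m) ≤ ⌊Real.log (J n)⌋₊ := by
  have hfar (x : ℕ) : ∀ᶠ y : ℕ in atTop, x < y ∧ blockEnd α x ≤ ⌊Real.log y⌋₊ :=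
    (eventually_gt_atTop x).and <| (tendsto_nat_floor_atTop.comp <|
      Real.tendsto_log_atTop.comp tendsto_natCast_atTop_atTop).eventually_ge_atTop _
  obtain ⟨J, hJp, hJ⟩ := exists_seq_of_forall_finset_exists p _ fun s _ =>
    (hp.and_eventually ((Finset.eventually_all s).2 fun x _ => hfar x)).exists
  exact ⟨J, hJp, fun m n hmn => (hJ m n hmn).1, fun m n hmn => (hJ m n hmn).2⟩

theorem mul_le_count_freePositions {J : ℕ → ℕ} [DecidablePred (· ∈ freePositions α J)]
    (hα : 0 < α) (hα1 : α ≤ 1)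
    (hmono : StrictMono J) (hsep : ∀ m n, m < n → blockEnd α (J m) ≤ ⌊Real.log (J n)⌋₊) (l : ℕ) :
    α * l ≤ Nat.count (· ∈ freePositions α J) l := by
  have free_below (n : ℕ) : J n - Real.log (J n) ≤ Nat.count (· ∈ freePositions α J) (J n) := by
    have hfree : ∀ i ∈ Ico ⌊Real.log (J n)⌋₊ (J n), i ∈ freePositions α J := fun i hi m hm =>
      (hsep m n (hmono.lt_iff_lt.1 (hm.trans_lt hi.2))).trans hi.1
    have hcount := le_add_count_of_forall_Ico hfree
    have hfloor := Nat.floor_le (Real.log_natCast_nonneg (J n))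
    rify at hcount
    linarith
  refine mul_le_count_of_forall_not hα1 (fun l hl => ?_) l
  obtain ⟨n, hn, hl⟩ : ∃ n, J n ≤ l ∧ l < blockEnd α (J n) := by
    simpa only [freePositions, mem_ofPred_eq, not_forall, not_le, exists_prop] using hl
  calc α * (l + 1) ≤ α * blockEnd α (J n) := by gcongr; exact_mod_cast Nat.succ_le_of_lt hl
    _ ≤ J n - Real.log (J n) := mul_blockEnd_le hα _
    _ ≤ Nat.count (· ∈ freePositions α J) (J n) := free_below n
    _ ≤ Nat.count (· ∈ freePositions α J) l := by exact_mod_cast Nat.count_monotone _ hn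

end SparseBlocks

section Approximation

variable {X : Type*} [MeasurableSpace X]

theorem exists_probabilityMeasure_smul_le (ν ρ : ProbabilityMeasure X) {w : ℝ≥0∞} (hw : w ≤ 1) :
    ∃ μ : ProbabilityMeasure X, (1 - w) • (ν : Measure X) ≤ μ ∧ w • (ρ : Measure X) ≤ μ :=
  ⟨⟨(1 - w) • (ν : Measure X) + w • (ρ : Measure X), ⟨by simp [tsub_add_cancel_of_le hw]⟩⟩,
    Measure.le_add_right le_rfl, Measure.le_add_left le_rfl⟩

theorem exists_probabilityMeasure_inv_card_le {ι : Type*} [Fintype ι] [Nonempty ι] {B : ι → Set X}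
    (hB : ∀ i, (B i).Nonempty) :
    ∃ μ : ProbabilityMeasure X, ∀ i, (Fintype.card ι : ℝ≥0∞)⁻¹ ≤ (μ : Measure X) (B i) := by
  choose x hx using hB
  refine ⟨⟨(Fintype.card ι : ℝ≥0∞)⁻¹ • ∑ i, Measure.dirac (x i), ⟨?_⟩⟩, fun i => ?_⟩
  · simp [ENNReal.inv_mul_cancel]
  · have hdirac : 1 ≤ Measure.dirac (x i) (B i) := by simp [hx i]
    have hsum : 1 ≤ ∑ j, Measure.dirac (x j) (B i) :=
      hdirac.trans (Finset.single_le_sum (f := fun j => Measure.dirac (x j) (B i))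
        (fun _ _ => zero_le) (Finset.mem_univ i))
    simpa using mul_le_mul_right hsum (Fintype.card ι : ℝ≥0∞)⁻¹

theorem tendsto_probabilityMeasure_of_smul_le [TopologicalSpace X] [OpensMeasurableSpace X]
    {ι : Type*} {L : Filter ι} [L.IsCountablyGenerated] {μ : ι → ProbabilityMeasure X}
    {ν : ProbabilityMeasure X} {c : ι → ℝ≥0∞} (hc : Tendsto c L (𝓝 1))
    (hμ : ∀ᶠ i in L, c i • (ν : Measure X) ≤ μ i) : Tendsto μ L (𝓝 ν) := by
  rcases L.eq_or_neBot with rfl | _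
  · exact tendsto_bot
  refine tendsto_of_forall_isOpen_le_liminf' fun G _ => ?_
  have hlim : Tendsto (fun i => c i * (ν : Measure X) G) L (𝓝 ((ν : Measure X) G)) := by
    simpa using ENNReal.Tendsto.mul_const hc (Or.inr (measure_ne_top (ν : Measure X) G))
  rw [← hlim.liminf_eq]
  exact liminf_le_liminf (hμ.mono fun i hi => hi G)

theorem isOpen_setOf_lt_measure [TopologicalSpace X] [OpensMeasurableSpace X]
    [HasOuterApproxClosed X] {G : Set X} (hG : IsOpen G) (c : ℝ≥0∞) :
    IsOpen {μ : ProbabilityMeasure X | c < (μ : Measure X) G} :=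
  isOpen_iff_mem_nhds.2 fun _ hμ => eventually_lt_of_lt_liminf <|
    lt_of_lt_of_le hμ (ProbabilityMeasure.le_liminf_measure_open_of_tendsto tendsto_id hG)

end Approximation

section TypicalSet

/-- The open box of side `2^{-j²}` at the lower corner of the dyadic cube `I_{j,k}`. -/
def cornerBox (d j : ℕ) (k : Fin d → Fin (2 ^ j)) : Set (Cube d) :=
  {x | ∀ i, x.1 i ∈ Ioo ((k i : ℝ) / 2 ^ j) ((k i : ℝ) / 2 ^ j + (2 ^ j ^ 2)⁻¹)}

variable {d j : ℕ}

theorem isOpen_cornerBox (k : Fin d → Fin (2 ^ j)) : IsOpen (cornerBox d j k) := by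
  have (i : Fin d) : Continuous fun x : Cube d => x.1 i :=
    (continuous_apply i).comp continuous_subtype_val
  simp only [cornerBox, ofPred_forall]
  exact isOpen_iInter_of_finite fun i => isOpen_Ioo.preimage (this i)

theorem inv_two_pow_sq_le (j : ℕ) : ((2 : ℝ) ^ j ^ 2)⁻¹ ≤ (2 ^ j)⁻¹ := by
  gcongr
  · exact one_le_two
  · exact Nat.le_self_pow two_ne_zero j

theorem cornerBox_subset_dyadicCube (k : Fin d → Fin (2 ^ j)) :
    cornerBox d j k ⊆ dyadicCube d j k := fun x hx i => by
  refine ⟨(hx i).1.le, (hx i).2.trans_le ?_⟩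
  rw [add_div, one_div]
  exact add_le_add_right (inv_two_pow_sq_le j) _

theorem cornerBox_nonempty (k : Fin d → Fin (2 ^ j)) : (cornerBox d j k).Nonempty := by
  have hside : (0 : ℝ) < (2 ^ j ^ 2)⁻¹ := by positivity
  have hle (i : Fin d) : (k i : ℝ) / 2 ^ j + (2 ^ j ^ 2)⁻¹ ≤ 1 := by
    have hk : (k i : ℝ) + 1 ≤ 2 ^ j := by exact_mod_cast (k i).is_lt
    calc (k i : ℝ) / 2 ^ j + (2 ^ j ^ 2)⁻¹ ≤ (k i : ℝ) / 2 ^ j + (2 ^ j)⁻¹ :=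
          add_le_add_right (inv_two_pow_sq_le j) _
      _ = (k i + 1) / 2 ^ j := by rw [add_div, one_div]
      _ ≤ 1 := (div_le_one (by positivity)).2 hk
  refine ⟨⟨fun i => (k i : ℝ) / 2 ^ j + (2 ^ j ^ 2)⁻¹ / 2, fun i => ?_, fun i => ?_⟩, fun i => ?_⟩
  · exact (by positivity : (0 : ℝ) ≤ (k i : ℝ) / 2 ^ j + (2 ^ j ^ 2)⁻¹ / 2)
  · exact (add_le_add_right (half_lt_self hside).le _).trans (hle i)
  · exact ⟨lt_add_of_pos_right _ (half_pos hside), add_lt_add_right (half_lt_self hside) _⟩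

theorem cornerBox_subset_ball {e : ℕ} (he : e ≤ j ^ 2) {k : Fin d → Fin (2 ^ j)} {x : Cube d}
    (hx : ∀ i, x.1 i ∈ Icc ((k i : ℝ) / 2 ^ j) ((k i : ℝ) / 2 ^ j + (2 ^ e)⁻¹)) :
    cornerBox d j k ⊆ ball x (2 ^ e)⁻¹ := fun y hy => by
  have hside : ((2 : ℝ) ^ j ^ 2)⁻¹ ≤ (2 ^ e)⁻¹ := by gcongr; exact one_le_two
  refine (dist_pi_lt_iff (by positivity)).2 fun i => ?_
  rw [Real.dist_eq, abs_lt]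
  constructor <;> linarith [(hx i).1, (hx i).2, (hy i).1, (hy i).2]

/-- All corner boxes of generation `j` carry about the mass they would have if `μ` were uniform on
the cubes of generation `j`, and the one at the origin is much heavier. -/
def ChargesLevel (μ : Measure (Cube d)) (j : ℕ) : Prop :=
  (∀ k, ((2 ^ j) ^ d * j : ℝ≥0∞)⁻¹ < μ (cornerBox d j k)) ∧ (j : ℝ≥0∞)⁻¹ < μ (cornerBox d j 0)

theorem isOpen_setOf_chargesLevel (d j : ℕ) :
    IsOpen {μ : ProbabilityMeasure (Cube d) | ChargesLevel (μ : Measure (Cube d)) j} := by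
  simp only [ChargesLevel, ofPred_and, ofPred_forall]
  exact (isOpen_iInter_of_finite fun k => isOpen_setOf_lt_measure (isOpen_cornerBox k) _).inter
    (isOpen_setOf_lt_measure (isOpen_cornerBox 0) _)

theorem exists_chargesLevel_smul_le (ν : ProbabilityMeasure (Cube d)) (hj : 4 ≤ j) :
    ∃ μ : ProbabilityMeasure (Cube d), ChargesLevel (μ : Measure (Cube d)) j ∧
      (1 - 4 * (j : ℝ≥0∞)⁻¹) • (ν : Measure (Cube d)) ≤ μ := by
  have hw : 4 * (j : ℝ≥0∞)⁻¹ ≤ 1 := by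
    rw [← div_eq_mul_inv]
    exact ENNReal.div_le_of_le_mul (by simpa using (by exact_mod_cast hj : (4 : ℝ≥0∞) ≤ j))
  obtain ⟨σ, hσ⟩ := exists_probabilityMeasure_inv_card_le (cornerBox_nonempty (d := d) (j := j))
  obtain ⟨δ, hδ⟩ := exists_probabilityMeasure_inv_card_le
    fun _ : Unit => cornerBox_nonempty (d := d) (j := j) 0
  obtain ⟨ρ, hρσ, hρδ⟩ := exists_probabilityMeasure_smul_le σ δ (w := 2⁻¹) (by simp)
  obtain ⟨μ, hμν, hμρ⟩ := exists_probabilityMeasure_smul_le ν ρ hw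
  have lt_measure_of_half_le {c : ℝ≥0∞} {s : Set (Cube d)} (hc : c ≠ 0) (hc' : c ≠ ∞)
      (hs : 2⁻¹ * c ≤ (ρ : Measure (Cube d)) s) :
      c * (j : ℝ≥0∞)⁻¹ < (μ : Measure (Cube d)) s := by
    have hj0 : (j : ℝ≥0∞) ≠ 0 := by exact_mod_cast (by lia : j ≠ 0)
    calc c * (j : ℝ≥0∞)⁻¹ < 2 * (c * (j : ℝ≥0∞)⁻¹) := by
          rw [two_mul]
          exact ENNReal.lt_add_right (ENNReal.mul_ne_top hc' (ENNReal.inv_ne_top.2 hj0))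
            (mul_ne_zero hc (ENNReal.inv_ne_zero.2 (ENNReal.natCast_ne_top j)))
      _ = 2 * 2⁻¹ * (2 * (c * (j : ℝ≥0∞)⁻¹)) := by
          rw [ENNReal.mul_inv_cancel two_ne_zero ENNReal.ofNat_ne_top, one_mul]
      _ = 4 * (j : ℝ≥0∞)⁻¹ * (2⁻¹ * c) := by ring
      _ ≤ 4 * (j : ℝ≥0∞)⁻¹ * (ρ : Measure (Cube d)) s := by gcongr
      _ ≤ (μ : Measure (Cube d)) s := hμρ s
  refine ⟨μ, ⟨fun k => ?_, ?_⟩, hμν⟩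
  · have hcard : (Fintype.card (Fin d → Fin (2 ^ j)) : ℝ≥0∞) = (2 ^ j) ^ d := by simp
    rw [ENNReal.mul_inv (by simp) (by simp), ← hcard]
    refine lt_measure_of_half_le (by simp) (by simp) ?_
    calc 2⁻¹ * (Fintype.card (Fin d → Fin (2 ^ j)) : ℝ≥0∞)⁻¹
        ≤ 2⁻¹ * (σ : Measure (Cube d)) (cornerBox d j k) := by gcongr; exact hσ k
      _ ≤ (ρ : Measure (Cube d)) (cornerBox d j k) := by
          simpa [ENNReal.one_sub_inv_two] using hρσ (cornerBox d j k)
  · rw [← one_mul (j : ℝ≥0∞)⁻¹]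
    refine lt_measure_of_half_le one_ne_zero ENNReal.one_ne_top ?_
    calc 2⁻¹ * 1 ≤ 2⁻¹ * (δ : Measure (Cube d)) (cornerBox d j 0) := by
          gcongr; simpa using hδ ()
      _ ≤ (ρ : Measure (Cube d)) (cornerBox d j 0) := hρδ _

theorem dense_iUnion_setOf_chargesLevel (d N : ℕ) : Dense (⋃ j ≥ N,
    {μ : ProbabilityMeasure (Cube d) | ChargesLevel (μ : Measure (Cube d)) j}) := fun ν => by
  have : Nonempty (ProbabilityMeasure (Cube d)) := ⟨ν⟩
  choose! μ hμ hνμ using fun (j : ℕ) (hj : 4 ≤ j) => exists_chargesLevel_smul_le ν hj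
  have hweight : Tendsto (fun j : ℕ => 1 - 4 * (j : ℝ≥0∞)⁻¹) atTop (𝓝 1) := by
    simpa using ENNReal.Tendsto.sub tendsto_const_nhds (ENNReal.Tendsto.const_mul
      ENNReal.tendsto_inv_nat_nhds_zero (Or.inr ENNReal.ofNat_ne_top)) (Or.inl ENNReal.one_ne_top)
  refine mem_closure_of_tendsto (tendsto_probabilityMeasure_of_smul_le hweight
    ((eventually_ge_atTop 4).mono hνμ)) ?_
  filter_upwards [eventually_ge_atTop 4, eventually_ge_atTop N] with j hj hjN
  exact mem_iUnion₂.2 ⟨j, hjN, hμ j hj⟩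

/-- The probability measures charging infinitely many levels. -/
def typicalSet (d : ℕ) : Set (ProbabilityMeasure (Cube d)) :=
  {μ | ∃ᶠ j in atTop, ChargesLevel (μ : Measure (Cube d)) j}

theorem typicalSet_eq_iInter (d : ℕ) : typicalSet d = ⋂ N : ℕ, ⋃ j ≥ N,
    {μ : ProbabilityMeasure (Cube d) | ChargesLevel (μ : Measure (Cube d)) j} := by
  ext μ
  simp [typicalSet, frequently_atTop]

theorem isGδ_typicalSet (d : ℕ) : IsGδ (typicalSet d) := by
  rw [typicalSet_eq_iInter]
  exact .iInter_of_isOpen fun _ => isOpen_biUnion fun j _ => isOpen_setOf_chargesLevel d j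

theorem dense_typicalSet (d : ℕ) : Dense (typicalSet d) := by
  rw [typicalSet_eq_iInter]
  exact dense_iInter_of_isOpen_nat
    (fun _ => isOpen_biUnion fun j _ => isOpen_setOf_chargesLevel d j)
    (dense_iUnion_setOf_chargesLevel d)

end TypicalSet

section LqSpectrum

variable {d j : ℕ} {μ : Measure (Cube d)}

theorem measurableSet_dyadicCube (k : Fin d → Fin (2 ^ j)) : MeasurableSet (dyadicCube d j k) := by
  have hcoord (i : Fin d) : Measurable fun x : Cube d => (x : Fin d → ℝ) i :=
    (measurable_pi_apply i).comp measurable_subtype_coe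
  simp only [dyadicCube, ofPred_forall, ofPred_and]
  exact .iInter fun i => (measurableSet_le measurable_const (hcoord i)).inter
    (measurableSet_lt (hcoord i) measurable_const)

theorem floor_mul_two_pow_of_mem_dyadicCube {k : Fin d → Fin (2 ^ j)} {x : Cube d}
    (hx : x ∈ dyadicCube d j k) (i : Fin d) : ⌊x.1 i * 2 ^ j⌋₊ = k i := by
  have hpos : (0 : ℝ) < 2 ^ j := by positivity
  have hle : (k i : ℝ) ≤ x.1 i * 2 ^ j := (div_le_iff₀ hpos).1 (hx i).1
  exact (Nat.floor_eq_iff ((Nat.cast_nonneg _).trans hle)).2 ⟨hle, (lt_div_iff₀ hpos).1 (hx i).2⟩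

theorem pairwise_disjoint_dyadicCube (d j : ℕ) :
    Pairwise (Function.onFun Disjoint (dyadicCube d j)) :=
  fun k k' hne => Set.disjoint_left.2 fun x hx hx' => hne <| funext fun i => Fin.ext <| by
    rw [← floor_mul_two_pow_of_mem_dyadicCube hx, floor_mul_two_pow_of_mem_dyadicCube hx']

theorem sum_measure_dyadicCube_le_one [IsProbabilityMeasure μ] (s : Finset (Fin d → Fin (2 ^ j))) :
    ∑ k ∈ s, (μ (dyadicCube d j k)).toReal ≤ 1 := by
  rw [← ENNReal.toReal_sum fun _ _ => measure_ne_top _ _, ← measure_biUnion_finset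
    ((pairwise_disjoint_dyadicCube d j).set_pairwise _) fun k _ => measurableSet_dyadicCube k]
  exact ENNReal.toReal_le_of_le_ofReal zero_le_one (by simpa using prob_le_one)

theorem lqSpectrum_one_nonneg [IsProbabilityMeasure μ] : 0 ≤ lqSpectrum μ 1 := by
  refine le_liminf_of_le (by isBoundedDefault) (Eventually.of_forall fun j => ?_)
  have hsum : dyadicSum μ 1 j ≤ 1 := by
    simpa only [dyadicSum, Real.rpow_one] using sum_measure_dyadicCube_le_one _
  have hlogb : Real.logb 2 (dyadicSum μ 1 j) ≤ 0 :=
    Real.logb_nonpos one_lt_two (Finset.sum_nonneg fun _ _ => by positivity) hsum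
  exact EReal.coe_nonneg.2 (mul_nonneg_of_nonpos_of_nonpos (neg_nonpos.2 (by positivity)) hlogb)

theorem liminf_le_of_frequently_le_of_tendsto {α β : Type*} [CompleteLinearOrder β]
    [TopologicalSpace β] [OrderTopology β] {l : Filter α} {f g : α → β} {c : β}
    (h : ∃ᶠ x in l, f x ≤ g x) (hg : Tendsto g l (𝓝 c)) : liminf f l ≤ c := by
  have : (l ⊓ 𝓟 {x | f x ≤ g x}).NeBot := frequently_mem_iff_neBot.1 h
  calc liminf f l ≤ liminf f (l ⊓ 𝓟 {x | f x ≤ g x}) := liminf_le_liminf_of_le inf_le_left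
    _ ≤ liminf g (l ⊓ 𝓟 {x | f x ≤ g x}) :=
      liminf_le_liminf (mem_inf_of_right (mem_principal_self _))
    _ = c := (hg.mono_left inf_le_left).liminf_eq

theorem lqSpectrum_le_of_frequently_le_dyadicSum {q a b : ℝ}
    (h : ∃ᶠ j : ℕ in atTop, (2 : ℝ) ^ (a * j) * (j : ℝ) ^ b ≤ dyadicSum μ q j) :
    lqSpectrum μ q ≤ ((-a : ℝ) : EReal) := by
  have hlim : Tendsto (fun j : ℕ => -(a + b / Real.log 2 * (Real.log j / j))) atTop (𝓝 (-a)) := by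
    simpa using ((tendsto_log_natCast_div_atTop.const_mul (b / Real.log 2)).const_add a).neg
  refine liminf_le_of_frequently_le_of_tendsto ?_ ((continuous_coe_real_ereal.tendsto _).comp hlim)
  refine (h.and_eventually (eventually_gt_atTop 0)).mono fun j ⟨hsum, hj⟩ => ?_
  have hj' : (0 : ℝ) < j := by exact_mod_cast hj
  have hlogb : a * j + b * Real.logb 2 j ≤ Real.logb 2 (dyadicSum μ q j) := by
    calc a * j + b * Real.logb 2 j = Real.logb 2 (2 ^ (a * j) * (j : ℝ) ^ b) := by
          rw [Real.logb_mul (by positivity) (by positivity), Real.logb_rpow two_pos (by norm_num),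
            Real.logb_rpow_eq_mul_logb_of_pos hj']
      _ ≤ _ := Real.logb_le_logb_of_le one_lt_two (by positivity) hsum
  refine EReal.coe_le_coe_iff.2 ?_
  calc -(1 / (j : ℝ)) * Real.logb 2 (dyadicSum μ q j)
      ≤ -(1 / (j : ℝ)) * (a * j + b * Real.logb 2 j) :=
        mul_le_mul_of_nonpos_left hlogb (neg_nonpos.2 (by positivity))
    _ = -(a + b / Real.log 2 * (Real.log j / j)) := by rw [Real.logb]; field_simp

theorem one_add_mul_sub_one_le_rpow {x q : ℝ} (hx : 0 < x) (hq : q ≤ 0) :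
    1 + q * (x - 1) ≤ x ^ q :=
  calc 1 + q * (x - 1) ≤ Real.log x * q + 1 := by
        nlinarith [Real.log_le_sub_one_of_pos hx]
    _ ≤ x ^ q := by rw [Real.rpow_def_of_pos hx]; exact Real.add_one_le_exp _

theorem card_rpow_one_sub_le_sum_rpow {ι : Type*} {s : Finset ι} {p : ι → ℝ} {q : ℝ}
    (hs : s.Nonempty) (hp : ∀ i ∈ s, 0 < p i) (hsum : ∑ i ∈ s, p i ≤ 1) (hq : q ≤ 0) :
    (s.card : ℝ) ^ (1 - q) ≤ ∑ i ∈ s, p i ^ q := by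
  have hN : (0 : ℝ) < s.card := by exact_mod_cast hs.card_pos
  have hmean : (s.card : ℝ) ≤ ∑ i ∈ s, (1 + q * (s.card * p i - 1)) := by
    calc (s.card : ℝ) ≤ s.card + q * (s.card * (∑ i ∈ s, p i) - s.card) := by
          nlinarith [mul_nonneg_of_nonpos_of_nonpos hq
            (sub_nonpos.2 (mul_le_of_le_one_right hN.le hsum))]
      _ = _ := by
        simp [Finset.sum_add_distrib, ← Finset.mul_sum, Finset.sum_sub_distrib]
  calc (s.card : ℝ) ^ (1 - q) = (s.card : ℝ) ^ (-q) * s.card := by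
        rw [← Real.rpow_add_one hN.ne', neg_add_eq_sub]
    _ ≤ (s.card : ℝ) ^ (-q) * ∑ i ∈ s, (s.card * p i) ^ q := by
        gcongr
        exact hmean.trans (Finset.sum_le_sum fun i hi =>
          one_add_mul_sub_one_le_rpow (mul_pos hN (hp i hi)) hq)
    _ = ∑ i ∈ s, p i ^ q := by
        rw [Finset.mul_sum]
        refine Finset.sum_congr rfl fun i hi => ?_
        rw [Real.mul_rpow hN.le (hp i hi).le, ← mul_assoc, ← Real.rpow_add hN]
        simp

theorem two_rpow_mul_mul (d j : ℕ) (c : ℝ) : (2 : ℝ) ^ (d * c * j) = ((2 ^ j) ^ d) ^ c := by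
  rw [← pow_mul, ← Real.rpow_natCast_mul zero_le_two]
  congr 1
  push_cast
  ring

namespace ChargesLevel

theorem pos (h : ChargesLevel μ j) : 0 < j := by
  refine Nat.pos_of_ne_zero fun hj => ?_
  subst hj
  simpa using h.2

theorem lt_toReal_measure_dyadicCube [IsFiniteMeasure μ] (h : ChargesLevel μ j)
    (k : Fin d → Fin (2 ^ j)) :
    (((2 : ℝ) ^ j) ^ d * j)⁻¹ < (μ (dyadicCube d j k)).toReal := by
  have := (ENNReal.toReal_lt_toReal (h.1 k).ne_top (measure_ne_top _ _)).2
    ((h.1 k).trans_le (measure_mono (cornerBox_subset_dyadicCube k)))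
  simpa using this

theorem inv_lt_toReal_measure_dyadicCube_zero [IsFiniteMeasure μ] (h : ChargesLevel μ j) :
    (j : ℝ)⁻¹ < (μ (dyadicCube d j 0)).toReal := by
  have := (ENNReal.toReal_lt_toReal h.2.ne_top (measure_ne_top _ _)).2
    (h.2.trans_le (measure_mono (cornerBox_subset_dyadicCube 0)))
  simpa using this

theorem toReal_measure_dyadicCube_pos [IsFiniteMeasure μ] (h : ChargesLevel μ j)
    (k : Fin d → Fin (2 ^ j)) : 0 < (μ (dyadicCube d j k)).toReal :=
  lt_of_le_of_lt (by positivity) (h.lt_toReal_measure_dyadicCube k)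

theorem dyadicSum_eq_sum [IsFiniteMeasure μ] (h : ChargesLevel μ j) (q : ℝ) :
    dyadicSum μ q j = ∑ k, (μ (dyadicCube d j k)).toReal ^ q := by
  rw [dyadicSum, Finset.filter_true_of_mem]
  exact fun k _ hk => by simpa [hk] using h.toReal_measure_dyadicCube_pos k

theorem rpow_le_dyadicSum_of_nonneg [IsFiniteMeasure μ] (h : ChargesLevel μ j) {q : ℝ}
    (hq : 0 ≤ q) : (2 : ℝ) ^ (d * (1 - q) * j) * (j : ℝ) ^ (-q) ≤ dyadicSum μ q j := by
  have hj : (0 : ℝ) < j := by exact_mod_cast h.pos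
  calc (2 : ℝ) ^ (d * (1 - q) * j) * (j : ℝ) ^ (-q)
      = ∑ _k : Fin d → Fin (2 ^ j), (((2 : ℝ) ^ j) ^ d * j)⁻¹ ^ q := by
        rw [two_rpow_mul_mul, Real.inv_rpow (by positivity), Real.mul_rpow (by positivity) hj.le,
          sub_eq_add_neg, Real.rpow_add (by positivity), Real.rpow_neg (by positivity),
          Real.rpow_neg hj.le, Real.rpow_one, mul_assoc, ← mul_inv]
        simp
    _ ≤ ∑ k, (μ (dyadicCube d j k)).toReal ^ q := by
        gcongr with k
        exact (h.lt_toReal_measure_dyadicCube k).le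
    _ = _ := (h.dyadicSum_eq_sum q).symm

theorem rpow_neg_le_dyadicSum [IsFiniteMeasure μ] (h : ChargesLevel μ j) {q : ℝ} (hq : 0 ≤ q) :
    (j : ℝ) ^ (-q) ≤ dyadicSum μ q j := by
  calc (j : ℝ) ^ (-q) = (j : ℝ)⁻¹ ^ q := by
        rw [Real.inv_rpow j.cast_nonneg, Real.rpow_neg j.cast_nonneg]
    _ ≤ (μ (dyadicCube d j 0)).toReal ^ q := by
        gcongr; exact h.inv_lt_toReal_measure_dyadicCube_zero.le
    _ ≤ ∑ k, (μ (dyadicCube d j k)).toReal ^ q :=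
        Finset.single_le_sum (f := fun k => (μ (dyadicCube d j k)).toReal ^ q)
          (fun _ _ => by positivity) (Finset.mem_univ 0)
    _ = _ := (h.dyadicSum_eq_sum q).symm

theorem rpow_le_dyadicSum_of_nonpos [IsProbabilityMeasure μ] (h : ChargesLevel μ j) {q : ℝ}
    (hq : q ≤ 0) : (2 : ℝ) ^ (d * (1 - q) * j) ≤ dyadicSum μ q j := by
  have hcard := card_rpow_one_sub_le_sum_rpow Finset.univ_nonempty
    (fun k _ => h.toReal_measure_dyadicCube_pos k) (sum_measure_dyadicCube_le_one _) hq
  rw [h.dyadicSum_eq_sum, two_rpow_mul_mul]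
  simpa using hcard

end ChargesLevel

theorem lqSpectrum_le_mul_sub_one [IsProbabilityMeasure μ] (hμ : ∃ᶠ j in atTop, ChargesLevel μ j)
    (q : ℝ) : lqSpectrum μ q ≤ ((d * (q - 1) : ℝ) : EReal) := by
  rw [← neg_sub, mul_neg]
  rcases le_total 0 q with hq | hq
  · exact lqSpectrum_le_of_frequently_le_dyadicSum
      (hμ.mono fun j hj => hj.rpow_le_dyadicSum_of_nonneg hq)
  · exact lqSpectrum_le_of_frequently_le_dyadicSum (b := 0)
      (hμ.mono fun j hj => by simpa using hj.rpow_le_dyadicSum_of_nonpos hq)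

theorem lqSpectrum_nonpos [IsFiniteMeasure μ] (hμ : ∃ᶠ j in atTop, ChargesLevel μ j) {q : ℝ}
    (hq : 0 ≤ q) : lqSpectrum μ q ≤ 0 := by
  simpa using lqSpectrum_le_of_frequently_le_dyadicSum (a := 0) (b := -q)
    (hμ.mono fun j hj => by simpa using hj.rpow_neg_le_dyadicSum hq)

theorem iInf_sub_lqSpectrum [IsProbabilityMeasure μ] (hμ : ∃ᶠ j in atTop, ChargesLevel μ j) {h : ℝ}
    (hh : h ∈ Icc (0 : ℝ) d) : ⨅ q : ℝ, ((q * h : ℝ) : EReal) - lqSpectrum μ q = h := by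
  refine le_antisymm (iInf_le_of_le 1 ?_) (le_iInf fun q => ?_)
  · calc ((1 * h : ℝ) : EReal) - lqSpectrum μ 1 ≤ ((1 * h : ℝ) : EReal) - 0 :=
        EReal.sub_le_sub le_rfl lqSpectrum_one_nonneg
      _ = h := by simp
  · have hτ : lqSpectrum μ q ≤ (((q - 1) * h : ℝ) : EReal) := by
      rcases le_total q 1 with hq | hq
      · refine (lqSpectrum_le_mul_sub_one hμ q).trans (EReal.coe_le_coe_iff.2 ?_)
        rw [mul_comm]
        exact mul_le_mul_of_nonpos_left hh.2 (sub_nonpos.2 hq)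
      · exact (lqSpectrum_nonpos hμ (zero_le_one.trans hq)).trans
          (EReal.coe_nonneg.2 (mul_nonneg (sub_nonneg.2 hq) hh.1))
    calc (h : EReal) = ((q * h : ℝ) : EReal) - (((q - 1) * h : ℝ) : EReal) := by
          rw [← EReal.coe_sub]; congr 1; ring
      _ ≤ _ := EReal.sub_le_sub le_rfl hτ

end LqSpectrum

section LevelSets

variable {d : ℕ} {μ : Measure (Cube d)}

theorem log_measure_div_log_le {X : Type*} [MeasurableSpace X] {μ : Measure X} {s : Set X}
    {a r : ℝ} (ha : 0 < a) (hr : r ∈ Icc 0 1) (h : ENNReal.ofReal a ≤ μ s) :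
    ENNReal.log (μ s) / (Real.log r : EReal) ≤ ((Real.log a / Real.log r : ℝ) : EReal) := by
  rw [EReal.coe_div, ← ENNReal.log_ofReal_of_pos ha]
  exact EReal.div_le_div_right_of_nonpos (EReal.coe_nonpos.2 (Real.log_nonpos hr.1 hr.2))
    (ENNReal.log_le_log h)

theorem locDim_le_of_tendsto {ι : Type*} {l : Filter ι} [l.NeBot] {a r : ι → ℝ} {h : ℝ}
    {x : Cube d} (ha : ∀ᶠ i in l, 0 < a i ∧ ENNReal.ofReal (a i) ≤ μ (ball x (r i)))
    (hr : Tendsto r l (𝓝[>] 0))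
    (hlim : Tendsto (fun i => Real.log (a i) / Real.log (r i)) l (𝓝 h)) : locDim μ x ≤ h := by
  have hr01 : ∀ᶠ i in l, r i ∈ Ioo 0 1 := hr.eventually (Ioo_mem_nhdsGT one_pos)
  calc locDim μ x
      ≤ liminf (fun i => ENNReal.log (μ (ball x (r i))) / (Real.log (r i) : EReal)) l :=
        liminf_le_liminf_of_le hr
    _ ≤ liminf (fun i => ((Real.log (a i) / Real.log (r i) : ℝ) : EReal)) l :=
        liminf_le_liminf <| (ha.and hr01).mono fun i hi =>
          log_measure_div_log_le hi.1.1 (Ioo_subset_Icc_self hi.2) hi.1.2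
    _ = h := ((continuous_coe_real_ereal.tendsto h).comp hlim).liminf_eq

theorem tendsto_log_div_log_blockEnd (d : ℕ) {α : ℝ} (hα : 0 < α) :
    Tendsto (fun j : ℕ => Real.log (((2 : ℝ) ^ j) ^ d * j)⁻¹ / Real.log (2 ^ blockEnd α j)⁻¹) atTop
      (𝓝 (d * α)) := by
  have hlim : Tendsto
      (fun j : ℕ => (d + Real.log j / j / Real.log 2) / (blockEnd α j / j : ℝ)) atTop
      (𝓝 (d * α)) := by
    rw [← div_inv_eq_mul]
    have hnum : Tendsto (fun j : ℕ => d + Real.log j / j / Real.log 2) atTop (𝓝 d) := by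
      simpa using (tendsto_log_natCast_div_atTop.div_const (Real.log 2)).const_add (d : ℝ)
    exact hnum.div (tendsto_blockEnd_div_atTop hα) (inv_ne_zero hα.ne')
  refine hlim.congr' ((eventually_gt_atTop 0).mono fun j hj => ?_)
  have hj' : (0 : ℝ) < j := by exact_mod_cast hj
  have hlog2 : Real.log 2 ≠ 0 := (Real.log_pos one_lt_two).ne'
  beta_reduce
  rw [Real.log_inv, Real.log_inv, neg_div_neg_eq, Real.log_mul (by positivity) hj'.ne',
    Real.log_pow, Real.log_pow, Real.log_pow]
  field_simp

theorem locDim_le_of_chargesLevel {α : ℝ} (hα : 0 < α) {J : ℕ → ℕ} (hJ : Tendsto J atTop atTop)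
    (hμ : ∀ n, ChargesLevel μ (J n)) {x : Cube d}
    (hx : ∀ n, ∃ k : Fin d → Fin (2 ^ J n), ∀ i, x.1 i ∈
      Icc ((k i : ℝ) / 2 ^ J n) ((k i : ℝ) / 2 ^ J n + (2 ^ blockEnd α (J n))⁻¹)) :
    locDim μ x ≤ ((d * α : ℝ) : EReal) := by
  refine locDim_le_of_tendsto ?_ ?_ ((tendsto_log_div_log_blockEnd d hα).comp hJ)
  · filter_upwards [hJ.eventually (eventually_blockEnd_le_sq hα)] with n hn
    have hj : (0 : ℝ) < J n := by exact_mod_cast (hμ n).pos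
    obtain ⟨k, hk⟩ := hx n
    have hpos : (0 : ℝ) < ((2 ^ J n) ^ d * J n) := by positivity
    refine ⟨inv_pos.2 hpos, ?_⟩
    calc ENNReal.ofReal (((2 : ℝ) ^ J n) ^ d * J n)⁻¹ = ((2 ^ J n) ^ d * J n : ℝ≥0∞)⁻¹ := by
          rw [ENNReal.ofReal_inv_of_pos hpos, ENNReal.ofReal_mul (by positivity),
            ENNReal.ofReal_pow (by positivity), ENNReal.ofReal_pow zero_le_two]
          simp
      _ ≤ μ (cornerBox d (J n) k) := ((hμ n).1 k).le
      _ ≤ μ (ball x (2 ^ blockEnd α (J n))⁻¹) := measure_mono (cornerBox_subset_ball hn hk)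
  · have hatTop : Tendsto (blockEnd α) atTop atTop := by
      refine tendsto_natCast_atTop_iff.1 <| ((tendsto_blockEnd_div_atTop hα).pos_mul_atTop
        (inv_pos.2 hα) tendsto_natCast_atTop_atTop).congr' ?_
      filter_upwards [eventually_gt_atTop 0] with j hj
      field_simp
    exact tendsto_inv_atTop_nhdsGT_zero.comp <|
      (tendsto_pow_atTop_atTop_of_one_lt one_lt_two).comp (hatTop.comp hJ)

theorem locDim_digitPoint_le {α : ℝ} (hα : 0 < α) {J : ℕ → ℕ} (hJ : Tendsto J atTop atTop)
    (hμ : ∀ n, ChargesLevel μ (J n)) (ω : Fin d → ℕ → Fin 2) :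
    locDim μ (digitPoint d (freePositions α J) ω) ≤ ((d * α : ℝ) : EReal) :=
  locDim_le_of_chargesLevel hα hJ hμ fun n =>
    ⟨fun i => digitPrefix ((freePositions α J).indicator (ω i)) (J n), fun _ =>
      ofDigits_mem_Icc_of_forall_eq_zero fun _ hj ht =>
        indicator_of_notMem (s := freePositions α J) (fun hfree => ht.not_ge (hfree n hj)) _⟩

theorem le_dimH_levelSet [IsFiniteMeasure μ] (hμ : ∃ᶠ j in atTop, ChargesLevel μ j) {h : ℝ≥0}
    (h0 : 0 < h) (hd : h ≤ d) : h ≤ dimH (levelSet μ h) := by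
  classical
  have hdpos : (0 : ℝ) < d := lt_of_lt_of_le (NNReal.coe_pos.2 h0) (by exact_mod_cast hd)
  set α : ℝ := h / d
  have hα : 0 < α := div_pos (NNReal.coe_pos.2 h0) hdpos
  have hα1 : α ≤ 1 := (div_le_one hdpos).2 (by exact_mod_cast hd)
  have hαd : d * α = h := mul_div_cancel₀ _ hdpos.ne'
  obtain ⟨J, hcharge, hmono, hsep⟩ := exists_sparse_seq hμ α
  have hac : digitMeasure d (freePositions α J) ≪ μH[h] :=
    digitMeasure_absolutelyContinuous d _ h0 fun l => by
      rw [← hαd, mul_assoc]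
      gcongr
      exact mul_le_count_freePositions hα hα1 hmono hsep l
  refine le_dimH_of_hausdorffMeasure_ne_zero fun hnull => ?_
  have hcover : digitPoint d (freePositions α J) ⁻¹'
      (levelSet μ h ∪ {x | locDim μ x < ((h : ℝ) : EReal)}) = univ :=
    eq_univ_of_forall fun ω => le_iff_eq_or_lt.1 <| by
      simpa only [hαd] using locDim_digitPoint_le hα hmono.tendsto_atTop hcharge ω
  have hmap := Measure.preimage_null_of_map_null (measurable_digitPoint d _).aemeasurable
    (hac (measure_union_null hnull (hausdorffMeasure_setOf_locDim_lt (μ := μ) h0)))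
  rw [hcover, measure_univ] at hmap
  exact one_ne_zero hmap

theorem dimH_levelSet [IsFiniteMeasure μ] (hμ : ∃ᶠ j in atTop, ChargesLevel μ j) {h : ℝ≥0}
    (hd : h ≤ d) : dimH (levelSet μ h) = h := by
  refine le_antisymm (dimH_levelSet_le h) ?_
  rcases eq_zero_or_pos h with rfl | h0
  · simp
  · exact le_dimH_levelSet hμ h0 hd

end LevelSets

/-- There is a dense `Gδ` set `R` of probability measures on `[0,1]^d`
(with the weak topology) such that every `μ ∈ R` satisfies the multifractal formalism at
every exponent `h ∈ [0,d]`: `dim_H E_μ(h) = inf_{q ∈ ℝ} (qh - τ_μ(q))`. -/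
theorem typical_measures_multifractal_formalism (d : ℕ) (hd : 1 ≤ d) :
    ∃ R : Set (ProbabilityMeasure (Cube d)), IsGδ R ∧ Dense R ∧
      ∀ μ ∈ R, ∀ h ∈ Set.Icc (0 : ℝ) (d : ℝ),
        (dimH (levelSet (μ : Measure (Cube d)) h) : EReal) =
          ⨅ q : ℝ, ((q * h : ℝ) : EReal) - lqSpectrum (μ : Measure (Cube d)) q := by
  refine ⟨typicalSet d, isGδ_typicalSet d, dense_typicalSet d, fun μ hμ h hh => ?_⟩
  rw [iInf_sub_lqSpectrum hμ hh]
  lift h to ℝ≥0 using hh.1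
  rw [dimH_levelSet hμ (by exact_mod_cast hh.2)]
  rfl
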